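/- Assume F has characteristic 2, let k ≥ 2, and suppose u ∈ F^{2^k} satisfies u(0) = u(1) = u(2) = 0 (a Type-IV node: the first three positions are frozen, all others arbitrary). Let c be the associated codeword. Then there exists ρ ∈ F such that for every 0 ≤ b < 4: ∑_{a=0}^{2^{k−2}−1} g0inv^{(k−2)}(a)·c(4a + b) = r^{(2)}(b)·ρ, where r^{(2)} is the last row of G2^{⊗2}. (Paper's Theorem 5.) -/

import Mathlib

open Finset

variable {F : Type*}

/-- Kronecker power of a 2×2 matrix, defined by the binary-digit product formula:
the `(i,j)` entry of `kron M k` is `∏ t < k, M i_t j_t` where `i_t, j_t` are the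
`t`-th binary digits of `i` and `j`. -/
noncomputable def kron [Field F] (M : Matrix (Fin 2) (Fin 2) F) (k : ℕ) :
    Matrix (Fin (2 ^ k)) (Fin (2 ^ k)) F :=
  fun i j => ∏ t ∈ Finset.range k,
    M (if (i : ℕ).testBit t then 1 else 0) (if (j : ℕ).testBit t then 1 else 0)

/-- The 2×2 non-binary polar kernel with rows (μ, 0) and (γ, δ). -/
noncomputable def G2 [Field F] (μ γ δ : F) : Matrix (Fin 2) (Fin 2) F := !![μ, 0; γ, δ]

/-- `Gk μ γ δ k = G2^{⊗k}`, the k-fold Kronecker power of the kernel. -/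
noncomputable def Gk [Field F] (μ γ δ : F) (k : ℕ) : Matrix (Fin (2 ^ k)) (Fin (2 ^ k)) F :=
  kron (G2 μ γ δ) k

/-- `g0inv μ γ δ k` : first column of the inverse of `G2^{⊗k}`. -/
noncomputable def g0inv [Field F] (μ γ δ : F) (k : ℕ) (j : Fin (2 ^ k)) : F :=
  (Gk μ γ δ k)⁻¹ j ⟨0, Nat.two_pow_pos k⟩

/-- `rk μ γ δ k` : last row of `G2^{⊗k}`. -/
noncomputable def rk [Field F] (μ γ δ : F) (k : ℕ) (j : Fin (2 ^ k)) : F :=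
  Gk μ γ δ k ⟨2 ^ k - 1, by have := Nat.two_pow_pos k; omega⟩ j

/-- codeword associated to an input vector `u`: `cᵀ = uᵀ · G2^{⊗k}`. -/
noncomputable def codeword [Field F] (μ γ δ : F) (k : ℕ) (u : Fin (2 ^ k) → F)
    (j : Fin (2 ^ k)) : F :=
  ∑ i, u i * Gk μ γ δ k i j

theorem index_lt {p q n a b : ℕ} (ha : a < q) (hb : b < p) (h : p * q = n) :
    p * a + b < n := by
  subst h
  have h1 : p * a + b < p * (a + 1) := by
    have hm : p * (a + 1) = p * a + p := by ring
    omega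
  have h2 : p * (a + 1) ≤ p * q := Nat.mul_le_mul le_rfl ha
  omega

/-!
Reading the low `n` bits of an index as the position in a block and the high `m` bits as the block
number identifies `M^{⊗(m+n)}` with `M^{⊗m} ⊗ M^{⊗n}`. Weighting the blocks of a codeword by
column `0` of the inverse of `M^{⊗m}` therefore undoes the first tensor factor: what remains is the
length-`2^n` codeword of the first input block. When only the last entry `ρ` of that block is not
frozen, this codeword is `ρ` times the last row of `M^{⊗n}`.
-/

open scoped Kronecker Matrix

theorem sum_mul_vecMul_kronecker_of_mul_eq_one {R l m n p : Type*} [CommSemiring R] [Fintype l]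
    [DecidableEq l] [Fintype m] [Fintype n] {A : Matrix l m R} {C : Matrix m l R} (hAC : A * C = 1)
    (B : Matrix n p R) (u : l × n → R) (i : l) (b : p) :
    ∑ a, C a i * (u ᵥ* (A ⊗ₖ B)) (a, b) = ((fun q => u (i, q)) ᵥ* B) b := by
  calc ∑ a, C a i * (u ᵥ* (A ⊗ₖ B)) (a, b)
      = ∑ a, ∑ x : l × n, u x * B x.2 b * (A x.1 a * C a i) := by
        simp only [Matrix.vecMul, dotProduct, Matrix.kroneckerMap_apply, Finset.mul_sum]
        exact sum_congr rfl fun a _ => sum_congr rfl fun x _ => by ring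
    _ = ∑ x : l × n, u x * B x.2 b * (A * C) x.1 i := by
        rw [sum_comm]
        simp only [Matrix.mul_apply, Finset.mul_sum]
    _ = ((fun q => u (i, q)) ᵥ* B) b := by
        simp [hAC, Matrix.one_apply, Fintype.sum_prod_type_right, Matrix.vecMul, dotProduct]

/-- The identification of pairs (block number, position in the block) with indices below
`2 ^ (m + n)`, where blocks have length `2 ^ n`: the block number gives the high bits. -/
def blockEquiv (m n : ℕ) : Fin (2 ^ m) × Fin (2 ^ n) ≃ Fin (2 ^ (m + n)) :=
  finProdFinEquiv.trans (finCongr (pow_add 2 m n).symm)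

theorem blockEquiv_apply {m n : ℕ} (a : Fin (2 ^ m)) (b : Fin (2 ^ n)) :
    blockEquiv m n (a, b) =
      ⟨2 ^ n * a + b, index_lt a.isLt b.isLt (by rw [pow_add, mul_comm])⟩ :=
  Fin.ext (add_comm _ _)

theorem two_pow_le_two_pow_add (m n : ℕ) : 2 ^ n ≤ 2 ^ (m + n) :=
  Nat.pow_le_pow_right two_pos (Nat.le_add_left n m)

theorem blockEquiv_zero {m n : ℕ} (b : Fin (2 ^ n)) :
    blockEquiv m n (0, b) = b.castLE (two_pow_le_two_pow_add m n) := by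
  simp [blockEquiv_apply, Fin.ext_iff]

section Kron

variable [Field F] (M : Matrix (Fin 2) (Fin 2) F)

theorem submatrix_kron_add (m n : ℕ) :
    (kron M (m + n)).submatrix (blockEquiv m n) (blockEquiv m n) = kron M m ⊗ₖ kron M n := by
  ext ⟨i, q⟩ ⟨a, b⟩
  have low_bits (x : Fin (2 ^ m)) (y : Fin (2 ^ n)) {t : ℕ} (ht : t < n) :
      (2 ^ n * (x : ℕ) + y).testBit t = (y : ℕ).testBit t := by
    rw [Nat.testBit_two_pow_mul_add _ y.isLt, if_pos ht]
  have high_bits (x : Fin (2 ^ m)) (y : Fin (2 ^ n)) (t : ℕ) :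
      (2 ^ n * (x : ℕ) + y).testBit (n + t) = (x : ℕ).testBit t := by
    simp [Nat.testBit_two_pow_mul_add _ y.isLt]
  simp only [Matrix.submatrix_apply, Matrix.kronecker_apply, kron, blockEquiv_apply]
  rw [add_comm m n, prod_range_add, mul_comm]
  congr 1
  · simp only [high_bits]
  · refine prod_congr rfl fun t ht => ?_
    rw [low_bits _ _ (mem_range.mp ht), low_bits _ _ (mem_range.mp ht)]

theorem kron_one : kron M 1 = M := by
  ext i j
  fin_cases i <;> fin_cases j <;> simp [kron]

variable {M} in
theorem isUnit_det_kron (hM : IsUnit M.det) (k : ℕ) : IsUnit (kron M k).det := by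
  induction k with
  | zero => simp [kron, Matrix.det_unique]
  | succ k ih =>
    rw [← Matrix.det_submatrix_equiv_self (blockEquiv k 1), submatrix_kron_add,
      Matrix.det_kronecker]
    have hM1 : IsUnit (kron M 1).det := by rwa [kron_one]
    exact (ih.pow _).mul (hM1.pow _)

end Kron

section Codeword

variable [Field F] {μ γ δ : F}

theorem isUnit_det_Gk (hμ : μ ≠ 0) (hδ : δ ≠ 0) (k : ℕ) : IsUnit (Gk μ γ δ k).det :=
  isUnit_det_kron (by simp [G2, Matrix.det_fin_two, hμ, hδ]) k

theorem codeword_blockEquiv {m n : ℕ} (u : Fin (2 ^ (m + n)) → F)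
    (p : Fin (2 ^ m) × Fin (2 ^ n)) :
    codeword μ γ δ (m + n) u (blockEquiv m n p) =
      ((u ∘ blockEquiv m n) ᵥ* (Gk μ γ δ m ⊗ₖ Gk μ γ δ n)) p := by
  simp only [Gk, ← submatrix_kron_add]
  exact (Equiv.sum_comp (blockEquiv m n) _).symm

theorem sum_g0inv_mul_codeword (hμ : μ ≠ 0) (hδ : δ ≠ 0) {m n : ℕ}
    (u : Fin (2 ^ (m + n)) → F) (b : Fin (2 ^ n)) :
    ∑ a : Fin (2 ^ m), g0inv μ γ δ m a * codeword μ γ δ (m + n) u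
        ⟨2 ^ n * a + b, index_lt a.isLt b.isLt (by rw [pow_add, mul_comm])⟩ =
      codeword μ γ δ n (fun q => u (q.castLE (two_pow_le_two_pow_add m n))) b := by
  simp only [← blockEquiv_apply, ← blockEquiv_zero, codeword_blockEquiv]
  exact sum_mul_vecMul_kronecker_of_mul_eq_one
    (Matrix.mul_nonsing_inv _ (isUnit_det_Gk hμ hδ m)) _ _ 0 b

theorem codeword_eq_rk_mul_last {n : ℕ} {v : Fin (2 ^ n) → F}
    (hv : ∀ q : Fin (2 ^ n), (q : ℕ) < 2 ^ n - 1 → v q = 0) (b : Fin (2 ^ n)) :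
    codeword μ γ δ n v b =
      rk μ γ δ n b * v ⟨2 ^ n - 1, Nat.sub_one_lt_of_lt (Nat.two_pow_pos n)⟩ := by
  rw [codeword, Fintype.sum_eq_single ⟨2 ^ n - 1, Nat.sub_one_lt_of_lt (Nat.two_pow_pos n)⟩]
  · exact mul_comm _ _
  · intro q hq
    rw [hv q (by rw [ne_eq, Fin.ext_iff] at hq; grind), zero_mul]

end Codeword

theorem stmt9_general [Field F] {μ γ δ : F} (hμ : μ ≠ 0) (hδ : δ ≠ 0) {m n : ℕ}
    {u : Fin (2 ^ (m + n)) → F} (hu : ∀ i : Fin (2 ^ (m + n)), (i : ℕ) < 2 ^ n - 1 → u i = 0)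
    (b : Fin (2 ^ n)) :
    ∑ a : Fin (2 ^ m), g0inv μ γ δ m a * codeword μ γ δ (m + n) u
        ⟨2 ^ n * a + b, index_lt a.isLt b.isLt (by rw [pow_add, mul_comm])⟩ =
      rk μ γ δ n b *
        u ⟨2 ^ n - 1, (Nat.sub_one_lt_of_lt (Nat.two_pow_pos n)).trans_le
          (two_pow_le_two_pow_add m n)⟩ :=
  (sum_g0inv_mul_codeword hμ hδ u b).trans (codeword_eq_rk_mul_last (fun q => hu (q.castLE _)) b)

/-- Paper's Theorem 5 (Type-IV node, with `k = m + 2 ≥ 2`): in characteristic 2, if the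
first three input positions are frozen, then there exists `ρ` with
`∑_a g0inv^{(k−2)}(a)·c(4a+b) = r^{(2)}(b)·ρ` for every `b < 4`. -/
theorem stmt9 [Field F] [CharP F 2] (μ γ δ : F) (hμ : μ ≠ 0) (hγ : γ ≠ 0) (hδ : δ ≠ 0)
    (m : ℕ) (u : Fin (2 ^ (m + 2)) → F) (hu0 : u 0 = 0) (hu1 : u 1 = 0) (hu2 : u 2 = 0) :
    ∃ ρ : F, ∀ b : Fin (2 ^ 2),
      (∑ a : Fin (2 ^ m), g0inv μ γ δ m a *
          codeword μ γ δ (m + 2) u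
            ⟨4 * (a : ℕ) + (b : ℕ), by
              have ha := a.isLt; have hb := b.isLt
              have h4 : (2 : ℕ) ^ 2 = 4 := by norm_num
              have hpq : (2 : ℕ) ^ (m + 2) = 2 ^ m * 4 := by rw [pow_add]; norm_num
              omega⟩) = rk μ γ δ 2 b * ρ := by
  refine ⟨_, stmt9_general hμ hδ (n := 2) fun i hi => ?_⟩
  rw [← Fin.cast_val_eq_self i]
  interval_cases (i : ℕ)
  exacts [hu0, hu1, hu2]
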